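/- arXiv:1909.05796 — 2 statements merged into one kernel-verified Lean document; each statement's English description precedes it below -/
import Mathlib

section
/- If α₁, α₂, α₃ are not vertices of an equilateral triangle, then u* and v* are precisely the two (distinct) roots of the quadratic (a²−3b)t² + (ab−9c)t + (b²−3ac) = 0; that is, (a²−3b)u*² + (ab−9c)u* + (b²−3ac) = 0, (a²−3b)v*² + (ab−9c)v* + (b²−3ac) = 0, a²−3b ≠ 0, and u* ≠ v*. -/
/-!
Let `f` be the monic cubic with roots `α₁, α₂, α₃`. The quadratic of the theorem is the Hessian
`f' ^ 2 - (3 / 2) * f * f''`. In terms of the cofactors `p₁ = (t - α₂) * (t - α₃)`,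
`p₂ = (t - α₁) * (t - α₃)`, `p₃ = (t - α₁) * (t - α₂)` we have `f' = p₁ + p₂ + p₃` and
`f * f'' / 2 = p₁ * p₂ + p₁ * p₃ + p₂ * p₃`, so the Hessian is a quadratic form in the `pᵢ` that
splits into two conjugate Lagrange resolvents. Since the weights of a resolvent sum to zero, the
`t ^ 2` terms cancel and each resolvent of the cofactors is affine in `t`; its zeros are
`u` and `v`.
-/

section CommRing

variable {R : Type*} [CommRing R]

/-- The Lagrange resolvent of `x, y, z` with weights `e₁, e₂, e₃`, which are meant to be the three
cube roots of a common element. The conjugate resolvent is obtained by exchanging `e₁` and `e₂`. -/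
def lagrangeResolvent (e₁ e₂ e₃ x y z : R) : R :=
  x * e₁ + y * e₂ + z * e₃

/-- The Hessian covariant `f' ^ 2 - (3 / 2) * f * f''` of the cubic
`f = t ^ 3 + a * t ^ 2 + b * t + c`, expanded so that no division occurs. -/
def cubicHessian (a b c t : R) : R :=
  (a ^ 2 - 3 * b) * t ^ 2 + (a * b - 9 * c) * t + (b ^ 2 - 3 * a * c)

variable {e₁ e₂ e₃ : R}

theorem lagrangeResolvent_mul_swap (hsum : e₁ + e₂ + e₃ = 0) (hmul : e₁ * e₂ = e₃ ^ 2)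
    (x y z : R) :
    lagrangeResolvent e₁ e₂ e₃ x y z * lagrangeResolvent e₂ e₁ e₃ x y z =
      e₃ ^ 2 * ((x + y + z) ^ 2 - 3 * (x * y + x * z + y * z)) := by
  simp only [lagrangeResolvent]
  linear_combination (x * y * (e₁ + e₂ - e₃) + (x + y) * z * e₃) * hsum + (x - y) ^ 2 * hmul

theorem lagrangeResolvent_cofactors (hsum : e₁ + e₂ + e₃ = 0) (α₁ α₂ α₃ t : R) :
    lagrangeResolvent e₁ e₂ e₃ ((t - α₂) * (t - α₃)) ((t - α₁) * (t - α₃))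
        ((t - α₁) * (t - α₂)) =
      lagrangeResolvent e₁ e₂ e₃ α₁ α₂ α₃ * t +
        lagrangeResolvent e₁ e₂ e₃ (α₂ * α₃) (α₁ * α₃) (α₁ * α₂) := by
  simp only [lagrangeResolvent]
  linear_combination (t ^ 2 - (α₁ + α₂ + α₃) * t) * hsum

theorem cubicHessian_eq_cofactors (α₁ α₂ α₃ t : R) :
    cubicHessian (-(α₁ + α₂ + α₃)) (α₁ * α₂ + α₁ * α₃ + α₂ * α₃) (-(α₁ * α₂ * α₃)) t =
      ((t - α₂) * (t - α₃) + (t - α₁) * (t - α₃) + (t - α₁) * (t - α₂)) ^ 2 -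
        3 * ((t - α₂) * (t - α₃) * ((t - α₁) * (t - α₃)) +
          (t - α₂) * (t - α₃) * ((t - α₁) * (t - α₂)) +
          (t - α₁) * (t - α₃) * ((t - α₁) * (t - α₂))) := by
  simp only [cubicHessian]
  ring

theorem sq_mul_cubicHessian (hsum : e₁ + e₂ + e₃ = 0) (hmul : e₁ * e₂ = e₃ ^ 2)
    (α₁ α₂ α₃ t : R) :
    e₃ ^ 2 *
        cubicHessian (-(α₁ + α₂ + α₃)) (α₁ * α₂ + α₁ * α₃ + α₂ * α₃) (-(α₁ * α₂ * α₃)) t =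
      (lagrangeResolvent e₁ e₂ e₃ α₁ α₂ α₃ * t +
          lagrangeResolvent e₁ e₂ e₃ (α₂ * α₃) (α₁ * α₃) (α₁ * α₂)) *
        (lagrangeResolvent e₂ e₁ e₃ α₁ α₂ α₃ * t +
          lagrangeResolvent e₂ e₁ e₃ (α₂ * α₃) (α₁ * α₃) (α₁ * α₂)) := by
  have hsum' : e₂ + e₁ + e₃ = 0 := by rwa [add_comm e₂]
  rw [cubicHessian_eq_cofactors, ← lagrangeResolvent_mul_swap hsum hmul,
    lagrangeResolvent_cofactors hsum, lagrangeResolvent_cofactors hsum']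

theorem lagrangeResolvent_products_mul_sub_swap (hsum : e₁ + e₂ + e₃ = 0) (α₁ α₂ α₃ : R) :
    lagrangeResolvent e₁ e₂ e₃ (α₂ * α₃) (α₁ * α₃) (α₁ * α₂) *
          lagrangeResolvent e₂ e₁ e₃ α₁ α₂ α₃ -
        lagrangeResolvent e₂ e₁ e₃ (α₂ * α₃) (α₁ * α₃) (α₁ * α₂) *
          lagrangeResolvent e₁ e₂ e₃ α₁ α₂ α₃ =
      e₃ * (e₂ - e₁) * ((α₁ - α₂) * (α₁ - α₃) * (α₂ - α₃)) := by
  simp only [lagrangeResolvent]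
  linear_combination (e₂ - e₁) * α₃ * (α₁ - α₂) * (α₁ + α₂) * hsum

end CommRing

section IsDomain

variable {R : Type*} [CommRing R] [IsDomain R] {x y z d : R}

theorem sq_add_mul_add_sq_eq_zero_of_pow_three_eq (hxy : x ≠ y) (hx : x ^ 3 = d)
    (hy : y ^ 3 = d) : x ^ 2 + x * y + y ^ 2 = 0 :=
  mul_left_cancel₀ (sub_ne_zero.2 hxy) (by linear_combination hx - hy)

theorem add_add_eq_zero_of_pow_three_eq (hxy : x ≠ y) (hxz : x ≠ z) (hyz : y ≠ z)
    (hx : x ^ 3 = d) (hy : y ^ 3 = d) (hz : z ^ 3 = d) : x + y + z = 0 :=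
  mul_left_cancel₀ (sub_ne_zero.2 hyz) <| by
    linear_combination sq_add_mul_add_sq_eq_zero_of_pow_three_eq hxy hx hy -
      sq_add_mul_add_sq_eq_zero_of_pow_three_eq hxz hx hz

theorem mul_eq_sq_of_pow_three_eq (hxy : x ≠ y) (hxz : x ≠ z) (hyz : y ≠ z)
    (hx : x ^ 3 = d) (hy : y ^ 3 = d) (hz : z ^ 3 = d) : x * y = z ^ 2 := by
  linear_combination (x + y - z) * add_add_eq_zero_of_pow_three_eq hxy hxz hyz hx hy hz -
    sq_add_mul_add_sq_eq_zero_of_pow_three_eq hxy hx hy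

end IsDomain

section Field

variable {K : Type*} [Field K]

/-- The zero, when `e₁ + e₂ + e₃ = 0`, of the resolvent of the cofactors `(t - α₂) * (t - α₃)`,
`(t - α₁) * (t - α₃)`, `(t - α₁) * (t - α₂)` as an affine function of `t`. It has the junk value `0`
if the resolvent of `α₁, α₂, α₃` vanishes. -/
def resolventRoot (e₁ e₂ e₃ α₁ α₂ α₃ : K) : K :=
  -(lagrangeResolvent e₁ e₂ e₃ (α₂ * α₃) (α₁ * α₃) (α₁ * α₂) /
    lagrangeResolvent e₁ e₂ e₃ α₁ α₂ α₃)

variable {e₁ e₂ e₃ α₁ α₂ α₃ : K}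

theorem lagrangeResolvent_mul_add_eq_zero_iff (hD : lagrangeResolvent e₁ e₂ e₃ α₁ α₂ α₃ ≠ 0)
    (t : K) :
    lagrangeResolvent e₁ e₂ e₃ α₁ α₂ α₃ * t +
        lagrangeResolvent e₁ e₂ e₃ (α₂ * α₃) (α₁ * α₃) (α₁ * α₂) = 0 ↔
      t = resolventRoot e₁ e₂ e₃ α₁ α₂ α₃ := by
  rw [resolventRoot, ← neg_div, eq_div_iff hD, mul_comm t, add_eq_zero_iff_eq_neg]

theorem cubicHessian_eq_zero_iff (hsum : e₁ + e₂ + e₃ = 0) (hmul : e₁ * e₂ = e₃ ^ 2)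
    (he₃ : e₃ ≠ 0) (hD : lagrangeResolvent e₁ e₂ e₃ α₁ α₂ α₃ ≠ 0)
    (hD' : lagrangeResolvent e₂ e₁ e₃ α₁ α₂ α₃ ≠ 0) (t : K) :
    cubicHessian (-(α₁ + α₂ + α₃)) (α₁ * α₂ + α₁ * α₃ + α₂ * α₃) (-(α₁ * α₂ * α₃)) t = 0 ↔
      t = resolventRoot e₁ e₂ e₃ α₁ α₂ α₃ ∨ t = resolventRoot e₂ e₁ e₃ α₁ α₂ α₃ := by
  rw [← mul_eq_zero_iff_left (pow_ne_zero 2 he₃), sq_mul_cubicHessian hsum hmul, mul_eq_zero,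
    lagrangeResolvent_mul_add_eq_zero_iff hD, lagrangeResolvent_mul_add_eq_zero_iff hD']

theorem resolventRoot_ne_swap (hsum : e₁ + e₂ + e₃ = 0) (he₃ : e₃ ≠ 0) (he : e₁ ≠ e₂)
    (h12 : α₁ ≠ α₂) (h13 : α₁ ≠ α₃) (h23 : α₂ ≠ α₃)
    (hD : lagrangeResolvent e₁ e₂ e₃ α₁ α₂ α₃ ≠ 0)
    (hD' : lagrangeResolvent e₂ e₁ e₃ α₁ α₂ α₃ ≠ 0) :
    resolventRoot e₁ e₂ e₃ α₁ α₂ α₃ ≠ resolventRoot e₂ e₁ e₃ α₁ α₂ α₃ := by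
  rw [resolventRoot, resolventRoot, Ne, neg_inj, div_eq_div_iff hD hD', ← sub_eq_zero,
    lagrangeResolvent_products_mul_sub_swap hsum]
  exact mul_ne_zero (mul_ne_zero he₃ (sub_ne_zero.2 he.symm))
    (mul_ne_zero (mul_ne_zero (sub_ne_zero.2 h12) (sub_ne_zero.2 h13)) (sub_ne_zero.2 h23))

theorem stmt_4_general {d a b c u v : K}
    (he₁ : e₁ ^ 3 = d) (he₂ : e₂ ^ 3 = d) (he₃ : e₃ ^ 3 = d)
    (he12 : e₁ ≠ e₂) (he13 : e₁ ≠ e₃) (he23 : e₂ ≠ e₃)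
    (h12 : α₁ ≠ α₂) (h13 : α₁ ≠ α₃) (h23 : α₂ ≠ α₃)
    (ha : a = -(α₁ + α₂ + α₃))
    (hb : b = α₁ * α₂ + α₁ * α₃ + α₂ * α₃)
    (hc : c = -(α₁ * α₂ * α₃))
    (hu : u = -((α₁ * α₂ * e₃ + α₁ * α₃ * e₂ + α₂ * α₃ * e₁) /
      (α₁ * e₁ + α₂ * e₂ + α₃ * e₃)))
    (hv : v = -((α₁ * α₂ * e₃ + α₁ * α₃ * e₁ + α₂ * α₃ * e₂) /
      (α₁ * e₂ + α₂ * e₁ + α₃ * e₃)))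
    (hne₁ : α₁ * e₁ + α₂ * e₂ + α₃ * e₃ ≠ 0)
    (hne₂ : α₁ * e₂ + α₂ * e₁ + α₃ * e₃ ≠ 0) :
    (a ^ 2 - 3 * b) * u ^ 2 + (a * b - 9 * c) * u + (b ^ 2 - 3 * a * c) = 0 ∧
    (a ^ 2 - 3 * b) * v ^ 2 + (a * b - 9 * c) * v + (b ^ 2 - 3 * a * c) = 0 ∧
    a ^ 2 - 3 * b ≠ 0 ∧
    u ≠ v := by
  have hsum := add_add_eq_zero_of_pow_three_eq he12 he13 he23 he₁ he₂ he₃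
  have hmul := mul_eq_sq_of_pow_three_eq he12 he13 he23 he₁ he₂ he₃
  have he₃_ne : e₃ ≠ 0 := by
    rintro rfl
    rcases mul_eq_zero.1 (hmul.trans (zero_pow two_ne_zero)) with h | h
    exacts [he13 h, he23 h]
  have hu' : u = resolventRoot e₁ e₂ e₃ α₁ α₂ α₃ := by
    rw [hu, resolventRoot, lagrangeResolvent, lagrangeResolvent]
    ring
  have hv' : v = resolventRoot e₂ e₁ e₃ α₁ α₂ α₃ := by
    rw [hv, resolventRoot, lagrangeResolvent, lagrangeResolvent]
    ring
  have hroots := cubicHessian_eq_zero_iff hsum hmul he₃_ne hne₁ hne₂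
  have hlead : (-(α₁ + α₂ + α₃)) ^ 2 - 3 * (α₁ * α₂ + α₁ * α₃ + α₂ * α₃) ≠ 0 := by
    rw [neg_sq]
    refine right_ne_zero_of_mul (a := e₃ ^ 2) ?_
    rw [← lagrangeResolvent_mul_swap hsum hmul]
    exact mul_ne_zero hne₁ hne₂
  subst ha hb hc hu' hv'
  exact ⟨(hroots _).2 (.inl rfl), (hroots _).2 (.inr rfl), hlead,
    resolventRoot_ne_swap hsum he₃_ne he12 h12 h13 h23 hne₁ hne₂⟩

end Field

section Complex

open Complex

theorem exp_ofReal_mul_I_injOn :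
    Set.InjOn (fun θ : ℝ ↦ exp (θ * I)) (Set.Ioc (-Real.pi) Real.pi) := fun _ hθ _ hφ h ↦
  Circle.exp_injOn_Ioc (by linarith) hθ hφ (Circle.ext h)

theorem exp_pi_div_three_mul_I_pow_three : exp ((Real.pi : ℂ) / 3 * I) ^ 3 = -1 := by
  rw [← exp_nat_mul, ← exp_pi_mul_I]
  congr 1
  push_cast
  ring

theorem exp_neg_pi_div_three_mul_I_pow_three : exp (-(Real.pi : ℂ) / 3 * I) ^ 3 = -1 := by
  rw [neg_div, neg_mul, exp_neg, inv_pow, exp_pi_div_three_mul_I_pow_three, inv_neg_one]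

theorem exp_neg_pi_div_three_mul_I_ne_exp_pi_div_three_mul_I :
    exp (-(Real.pi : ℂ) / 3 * I) ≠ exp ((Real.pi : ℂ) / 3 * I) := by
  have hpi := Real.pi_pos
  have hne := exp_ofReal_mul_I_injOn.ne (x := -Real.pi / 3) (y := Real.pi / 3)
    ⟨by linarith, by linarith⟩ ⟨by linarith, by linarith⟩ (by linarith)
  simpa only [ofReal_div, ofReal_neg, ofReal_ofNat] using hne

theorem exp_pi_div_three_mul_I_ne_neg_one : exp ((Real.pi : ℂ) / 3 * I) ≠ -1 := by
  have hpi := Real.pi_pos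
  have hne := exp_ofReal_mul_I_injOn.ne (x := Real.pi / 3) (y := Real.pi)
    ⟨by linarith, by linarith⟩ ⟨by linarith, le_rfl⟩ (by linarith)
  simpa only [ofReal_div, ofReal_ofNat, exp_pi_mul_I] using hne

theorem exp_neg_pi_div_three_mul_I_ne_neg_one : exp (-(Real.pi : ℂ) / 3 * I) ≠ -1 := by
  rw [neg_div, neg_mul, exp_neg, Ne, inv_eq_iff_eq_inv, inv_neg_one]
  exact exp_pi_div_three_mul_I_ne_neg_one

end Complex

theorem stmt_4 (α₁ α₂ α₃ e₁ e₂ e₃ a b c u v : ℂ)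
    (he₁ : e₁ = Complex.exp (-(Real.pi : ℂ) / 3 * Complex.I))
    (he₂ : e₂ = Complex.exp ((Real.pi : ℂ) / 3 * Complex.I))
    (he₃ : e₃ = -1)
    (h12 : α₁ ≠ α₂) (h13 : α₁ ≠ α₃) (h23 : α₂ ≠ α₃)
    (ha : a = -(α₁ + α₂ + α₃))
    (hb : b = α₁ * α₂ + α₁ * α₃ + α₂ * α₃)
    (hc : c = -(α₁ * α₂ * α₃))
    (hu : u = -((α₁ * α₂ * e₃ + α₁ * α₃ * e₂ + α₂ * α₃ * e₁) /
      (α₁ * e₁ + α₂ * e₂ + α₃ * e₃)))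
    (hv : v = -((α₁ * α₂ * e₃ + α₁ * α₃ * e₁ + α₂ * α₃ * e₂) /
      (α₁ * e₂ + α₂ * e₁ + α₃ * e₃)))
    (hne₁ : α₁ * e₁ + α₂ * e₂ + α₃ * e₃ ≠ 0)
    (hne₂ : α₁ * e₂ + α₂ * e₁ + α₃ * e₃ ≠ 0) :
    (a ^ 2 - 3 * b) * u ^ 2 + (a * b - 9 * c) * u + (b ^ 2 - 3 * a * c) = 0 ∧
    (a ^ 2 - 3 * b) * v ^ 2 + (a * b - 9 * c) * v + (b ^ 2 - 3 * a * c) = 0 ∧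
    a ^ 2 - 3 * b ≠ 0 ∧
    u ≠ v := by
  subst he₁ he₂ he₃
  exact stmt_4_general exp_neg_pi_div_three_mul_I_pow_three exp_pi_div_three_mul_I_pow_three
    (Odd.neg_one_pow (by decide))
    exp_neg_pi_div_three_mul_I_ne_exp_pi_div_three_mul_I exp_neg_pi_div_three_mul_I_ne_neg_one
    exp_pi_div_three_mul_I_ne_neg_one h12 h13 h23 ha hb hc hu hv hne₁ hne₂
end

section
/- Let u₁, u₂ ∈ ℂ be nonzero. Assume that the denominators u₁(α₁e₁+α₂e₂+α₃e₃)+(α₁e₂+α₂e₁+α₃e₃), u₂(α₁e₁+α₂e₂+α₃e₃)+(α₁e₂+α₂e₁+α₃e₃), and (−1/(u₁u₂))(α₁e₁+α₂e₂+α₃e₃)+(α₁e₂+α₂e₁+α₃e₃) are all nonzero (so W(u₁), W(u₂), W(−1/(u₁u₂)) are finite), and that 3W(u₁)W(u₂) + a(W(u₁)+W(u₂)) + b ≠ 0 (so F(W(u₁),W(u₂)) is defined). Then F(W(u₁), W(u₂)) = W(−1/(u₁u₂)). -/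
/-!
The equation `w = F z₁ z₂` says that `z₁`, `z₂`, `w` are apolar to the cubic with roots `αₖ`, that
is, that the polarization of this cubic vanishes at `(z₁, z₂, w)`. Polarization commutes with linear
substitutions of the homogeneous variables, so a Möbius transformation that sends the roots of one
cubic to the roots of another carries apolar triples to apolar triples. Now `W` sends the roots of
`X ^ 3 + 1` to the `αₖ`, and the polarization of `X ^ 3 + 1` at `(u₁, u₂, u₃)` is
`u₁ * u₂ * u₃ + 1`, which vanishes for `u₃ = -1 / (u₁ * u₂)`.
-/

section CommRing

variable {R : Type*} [CommRing R]

/-- Three times the polarization of the binary cubic form `∏ k, (m k * X - n k * Y)`, evaluated at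
the vectors `(x i, y i)`. The factor `3` keeps the coefficients integral. The cubic
`∏ k, (X - α k)` and the affine points `z i` correspond to `m = 1`, `n = α`, `x = z`, `y = 1`. -/
def cubicPolar (m n x y : Fin 3 → R) : R :=
  3 * (m 0 * m 1 * m 2) * (x 0 * x 1 * x 2)
    - (n 0 * m 1 * m 2 + m 0 * n 1 * m 2 + m 0 * m 1 * n 2)
      * (y 0 * x 1 * x 2 + x 0 * y 1 * x 2 + x 0 * x 1 * y 2)
    + (m 0 * n 1 * n 2 + n 0 * m 1 * n 2 + n 0 * n 1 * m 2)
      * (x 0 * y 1 * y 2 + y 0 * x 1 * y 2 + y 0 * y 1 * x 2)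
    - 3 * (n 0 * n 1 * n 2) * (y 0 * y 1 * y 2)

theorem cubicPolar_comm (m n x y : Fin 3 → R) : cubicPolar m n x y = cubicPolar x y m n := by
  unfold cubicPolar
  ring

theorem cubicPolar_mul_left (l m n x y : Fin 3 → R) :
    cubicPolar (l * m) (l * n) x y = (∏ k, l k) * cubicPolar m n x y := by
  simp only [cubicPolar, Pi.mul_apply, Fin.prod_univ_three]
  ring

theorem cubicPolar_mul_right (l m n x y : Fin 3 → R) :
    cubicPolar m n (l * x) (l * y) = (∏ i, l i) * cubicPolar m n x y := by
  rw [cubicPolar_comm, cubicPolar_mul_left, cubicPolar_comm]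

theorem cubicPolar_linear_subst (p q r s : R) (m n x y : Fin 3 → R) :
    cubicPolar m n (p • x + q • y) (r • x + s • y) =
      cubicPolar (p • m - r • n) (s • n - q • m) x y := by
  simp only [cubicPolar, Pi.add_apply, Pi.sub_apply, Pi.smul_apply, smul_eq_mul]
  ring

theorem cubicPolar_affine (α₁ α₂ α₃ z₁ z₂ z₃ : R) :
    cubicPolar 1 ![α₁, α₂, α₃] ![z₁, z₂, z₃] 1 =
      3 * z₁ * z₂ * z₃ - (α₁ + α₂ + α₃) * (z₁ * z₂ + z₁ * z₃ + z₂ * z₃)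
        + (α₁ * α₂ + α₁ * α₃ + α₂ * α₃) * (z₁ + z₂ + z₃) - 3 * (α₁ * α₂ * α₃) := by
  simp only [cubicPolar, Pi.one_apply, Matrix.cons_val]
  ring

theorem cubicPolar_roots_X_pow_three_add_one {e₁ e₂ : R} (hadd : e₁ + e₂ = 1)
    (hmul : e₁ * e₂ = 1) (u₁ u₂ u₃ : R) :
    cubicPolar 1 ![e₁, e₂, -1] ![u₁, u₂, u₃] 1 = 3 * (u₁ * u₂ * u₃ + 1) := by
  rw [cubicPolar_affine]
  linear_combination
    (-(u₁ * u₂ + u₁ * u₃ + u₂ * u₃) - (u₁ + u₂ + u₃)) * hadd + (u₁ + u₂ + u₃ + 3) * hmul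

theorem cubicPolar_mobius {p q r s : R} {α e u w : Fin 3 → R}
    (he : ∀ k, e k * p + q = α k * (e k * r + s))
    (hw : ∀ i, u i * p + q = w i * (u i * r + s)) :
    (∏ i, (u i * r + s)) * cubicPolar 1 α w 1 = (∏ k, (p - α k * r)) * cubicPolar 1 e u 1 := by
  have hnum : (fun i ↦ u i * r + s) * w = p • u + q • 1 := by
    ext i
    simpa [mul_comm] using (hw i).symm
  have hden : (fun i ↦ u i * r + s) * 1 = r • u + s • 1 := by
    ext i
    simp [mul_comm]
  have hlead : p • 1 - r • α = (fun k ↦ p - α k * r) * 1 := by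
    ext k
    simp [mul_comm]
  have hroot : s • α - q • 1 = (fun k ↦ p - α k * r) * e := by
    ext k
    simp only [Pi.sub_apply, Pi.smul_apply, Pi.mul_apply, Pi.one_apply, smul_eq_mul]
    linear_combination -he k
  rw [← cubicPolar_mul_right, hnum, hden, cubicPolar_linear_subst, hlead, hroot,
    cubicPolar_mul_left]

theorem cubicPolar_mobius_eq_zero [IsDomain R] {p q r s : R} {α e u w : Fin 3 → R}
    (he : ∀ k, e k * p + q = α k * (e k * r + s))
    (hw : ∀ i, u i * p + q = w i * (u i * r + s)) (hden : ∀ i, u i * r + s ≠ 0)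
    (h : cubicPolar 1 e u 1 = 0) : cubicPolar 1 α w 1 = 0 := by
  have hprod := cubicPolar_mobius he hw
  rw [h, mul_zero] at hprod
  exact (mul_eq_zero.mp hprod).resolve_left (Finset.prod_ne_zero_iff.mpr fun i _ ↦ hden i)

-- With the denominator cleared, this is `W (e k) = α k`.
theorem mobius_interpolates_roots {e₁ e₂ : R} (hadd : e₁ + e₂ = 1) (hmul : e₁ * e₂ = 1)
    (α₁ α₂ α₃ : R) (k : Fin 3) :
    ![e₁, e₂, -1] k * -(α₁ * α₂ * -1 + α₁ * α₃ * e₂ + α₂ * α₃ * e₁)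
        + -(α₁ * α₂ * -1 + α₁ * α₃ * e₁ + α₂ * α₃ * e₂) =
      ![α₁, α₂, α₃] k *
        (![e₁, e₂, -1] k * (α₁ * e₁ + α₂ * e₂ + α₃ * -1) + (α₁ * e₂ + α₂ * e₁ + α₃ * -1)) := by
  have hsq₁ : e₁ ^ 2 = -e₂ := by linear_combination (e₁ + 1) * hadd - hmul
  have hsq₂ : e₂ ^ 2 = -e₁ := by linear_combination (e₂ + 1) * hadd - hmul
  fin_cases k <;> simp only [Fin.zero_eta, Fin.mk_one, Fin.reduceFinMk, Matrix.cons_val]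
  · linear_combination -(α₁ * α₂ + α₁ * α₃) * hmul - (α₂ * α₃ + α₁ ^ 2) * hsq₁
  · linear_combination -(α₁ * α₂ + α₂ * α₃) * hmul - (α₁ * α₃ + α₂ ^ 2) * hsq₂
  · ring

end CommRing

section Field

variable {K : Type*} [Field K]

theorem eq_neg_div_of_cubicPolar_eq_zero {α₁ α₂ α₃ a b c z₁ z₂ z₃ : K}
    (ha : a = -(α₁ + α₂ + α₃)) (hb : b = α₁ * α₂ + α₁ * α₃ + α₂ * α₃) (hc : c = -(α₁ * α₂ * α₃))
    (hden : 3 * z₁ * z₂ + a * (z₁ + z₂) + b ≠ 0)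
    (h : cubicPolar 1 ![α₁, α₂, α₃] ![z₁, z₂, z₃] 1 = 0) :
    z₃ = -((a * z₁ * z₂ + b * (z₁ + z₂) + 3 * c) / (3 * z₁ * z₂ + a * (z₁ + z₂) + b)) := by
  rw [cubicPolar_affine] at h
  rw [← neg_div, eq_div_iff hden]
  subst ha hb hc
  linear_combination h

theorem stmt_6_general (α₁ α₂ α₃ e₁ e₂ e₃ a b c : K)
    (F : K → K → K) (W : K → K)
    (hadd : e₁ + e₂ = 1) (hmul : e₁ * e₂ = 1) (he₃ : e₃ = -1)
    (ha : a = -(α₁ + α₂ + α₃))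
    (hb : b = α₁ * α₂ + α₁ * α₃ + α₂ * α₃)
    (hc : c = -(α₁ * α₂ * α₃))
    (hF : ∀ z₁ z₂, F z₁ z₂ =
      -((a * z₁ * z₂ + b * (z₁ + z₂) + 3 * c) / (3 * z₁ * z₂ + a * (z₁ + z₂) + b)))
    (hW : ∀ z, W z =
      -((z * (α₁ * α₂ * e₃ + α₁ * α₃ * e₂ + α₂ * α₃ * e₁) +
          (α₁ * α₂ * e₃ + α₁ * α₃ * e₁ + α₂ * α₃ * e₂)) /
        (z * (α₁ * e₁ + α₂ * e₂ + α₃ * e₃) + (α₁ * e₂ + α₂ * e₁ + α₃ * e₃))))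
    (u₁ u₂ : K) (hu₁ : u₁ ≠ 0) (hu₂ : u₂ ≠ 0)
    (hd₁ : u₁ * (α₁ * e₁ + α₂ * e₂ + α₃ * e₃) + (α₁ * e₂ + α₂ * e₁ + α₃ * e₃) ≠ 0)
    (hd₂ : u₂ * (α₁ * e₁ + α₂ * e₂ + α₃ * e₃) + (α₁ * e₂ + α₂ * e₁ + α₃ * e₃) ≠ 0)
    (hd₃ : (-(1 / (u₁ * u₂))) * (α₁ * e₁ + α₂ * e₂ + α₃ * e₃) +
      (α₁ * e₂ + α₂ * e₁ + α₃ * e₃) ≠ 0)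
    (hdF : 3 * (W u₁) * (W u₂) + a * (W u₁ + W u₂) + b ≠ 0) :
    F (W u₁) (W u₂) = W (-(1 / (u₁ * u₂))) := by
  subst he₃
  have hpolar : cubicPolar 1 ![e₁, e₂, -1] ![u₁, u₂, -(1 / (u₁ * u₂))] 1 = 0 := by
    rw [cubicPolar_roots_X_pow_three_add_one hadd hmul]
    field_simp
    ring
  have hWmul {z : K}
      (hz : z * (α₁ * e₁ + α₂ * e₂ + α₃ * -1) + (α₁ * e₂ + α₂ * e₁ + α₃ * -1) ≠ 0) :
      z * -(α₁ * α₂ * -1 + α₁ * α₃ * e₂ + α₂ * α₃ * e₁)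
          + -(α₁ * α₂ * -1 + α₁ * α₃ * e₁ + α₂ * α₃ * e₂) =
        W z * (z * (α₁ * e₁ + α₂ * e₂ + α₃ * -1) + (α₁ * e₂ + α₂ * e₁ + α₃ * -1)) := by
    rw [hW, neg_mul, div_mul_cancel₀ _ hz]
    ring
  have hWpolar : cubicPolar 1 ![α₁, α₂, α₃] ![W u₁, W u₂, W (-(1 / (u₁ * u₂)))] 1 = 0 := by
    refine cubicPolar_mobius_eq_zero (mobius_interpolates_roots hadd hmul α₁ α₂ α₃) ?_ ?_ hpolar
    · intro i
      fin_cases i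
      exacts [hWmul hd₁, hWmul hd₂, hWmul hd₃]
    · intro i
      fin_cases i
      exacts [hd₁, hd₂, hd₃]
  rw [hF]
  exact (eq_neg_div_of_cubicPolar_eq_zero ha hb hc hdF hWpolar).symm

end Field

theorem exp_neg_pi_div_three_mul_I_add_exp :
    Complex.exp (-(Real.pi : ℂ) / 3 * Complex.I) + Complex.exp ((Real.pi : ℂ) / 3 * Complex.I)
      = 1 := by
  have hcos : Complex.cos ((Real.pi : ℂ) / 3) = 1 / 2 := by
    rw [← Complex.ofReal_ofNat, ← Complex.ofReal_div, ← Complex.ofReal_cos, Real.cos_pi_div_three]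
    norm_num
  rw [add_comm, neg_div, ← Complex.two_cos, hcos]
  norm_num

theorem exp_neg_pi_div_three_mul_I_mul_exp :
    Complex.exp (-(Real.pi : ℂ) / 3 * Complex.I) * Complex.exp ((Real.pi : ℂ) / 3 * Complex.I)
      = 1 := by
  rw [neg_div, neg_mul, ← Complex.exp_add, neg_add_cancel, Complex.exp_zero]

theorem stmt_6 (α₁ α₂ α₃ e₁ e₂ e₃ a b c : ℂ)
    (F : ℂ → ℂ → ℂ) (W : ℂ → ℂ)
    (he₁ : e₁ = Complex.exp (-(Real.pi : ℂ) / 3 * Complex.I))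
    (he₂ : e₂ = Complex.exp ((Real.pi : ℂ) / 3 * Complex.I))
    (he₃ : e₃ = -1)
    (h12 : α₁ ≠ α₂) (h13 : α₁ ≠ α₃) (h23 : α₂ ≠ α₃)
    (ha : a = -(α₁ + α₂ + α₃))
    (hb : b = α₁ * α₂ + α₁ * α₃ + α₂ * α₃)
    (hc : c = -(α₁ * α₂ * α₃))
    (hF : ∀ z₁ z₂, F z₁ z₂ =
      -((a * z₁ * z₂ + b * (z₁ + z₂) + 3 * c) / (3 * z₁ * z₂ + a * (z₁ + z₂) + b)))
    (hW : ∀ z, W z =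
      -((z * (α₁ * α₂ * e₃ + α₁ * α₃ * e₂ + α₂ * α₃ * e₁) +
          (α₁ * α₂ * e₃ + α₁ * α₃ * e₁ + α₂ * α₃ * e₂)) /
        (z * (α₁ * e₁ + α₂ * e₂ + α₃ * e₃) + (α₁ * e₂ + α₂ * e₁ + α₃ * e₃))))
    (u₁ u₂ : ℂ) (hu₁ : u₁ ≠ 0) (hu₂ : u₂ ≠ 0)
    (hd₁ : u₁ * (α₁ * e₁ + α₂ * e₂ + α₃ * e₃) + (α₁ * e₂ + α₂ * e₁ + α₃ * e₃) ≠ 0)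
    (hd₂ : u₂ * (α₁ * e₁ + α₂ * e₂ + α₃ * e₃) + (α₁ * e₂ + α₂ * e₁ + α₃ * e₃) ≠ 0)
    (hd₃ : (-(1 / (u₁ * u₂))) * (α₁ * e₁ + α₂ * e₂ + α₃ * e₃) +
      (α₁ * e₂ + α₂ * e₁ + α₃ * e₃) ≠ 0)
    (hdF : 3 * (W u₁) * (W u₂) + a * (W u₁ + W u₂) + b ≠ 0) :
    F (W u₁) (W u₂) = W (-(1 / (u₁ * u₂))) :=
  stmt_6_general α₁ α₂ α₃ e₁ e₂ e₃ a b c F W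
    (he₁ ▸ he₂ ▸ exp_neg_pi_div_three_mul_I_add_exp)
    (he₁ ▸ he₂ ▸ exp_neg_pi_div_three_mul_I_mul_exp)
    he₃ ha hb hc hF hW u₁ u₂ hu₁ hu₂ hd₁ hd₂ hd₃ hdF
end
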